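/- arXiv:2002.01504 — 4 statements merged into one kernel-verified Lean document; each statement's English description precedes it below -/
import Mathlib

section
/- (Weighted-value bound, steps (b)–(d) in the proof of Theorem 1.) Under the IRLS setup, Σ_{m=1}^M Δ_m · (t_m(ρ') + ε²)^{p̃/2 − 1} · t_m(ρ'') ≤ Σ_{m=1}^M Δ_m · t_m(ρ')^{p̃/2}. -/
open Finset

/-- Total transmit power `t_m(ρ) = Σ_k ρ_{mk}` of AP `m` (the squared norm `‖ρ_m‖²`
in the paper's square-root parametrization). -/
noncomputable def totPow {M K : ℕ} (ρ : Fin M → Fin K → ℝ) (m : Fin M) : ℝ :=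
  ∑ k : Fin K, ρ m k

/-- **steps (b)–(d) in the proof of Theorem 1.** If `ρ''` minimizes the
weighted objective with weights `a_m = (Δ_m p̃/2)(t_m(ρ') + ε²)^{p̃/2−1}` over the feasible
set `F ∋ ρ'`, then `Σ_m Δ_m (t_m(ρ') + ε²)^{p̃/2−1} t_m(ρ'') ≤ Σ_m Δ_m t_m(ρ')^{p̃/2}`. -/
theorem irls_weighted_value_bound (M K : ℕ) (hM : 1 ≤ M) (hK : 1 ≤ K)
    (Δ : Fin M → ℝ) (hΔ : ∀ m, 0 < Δ m) (p ε : ℝ)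
    (hp0 : 0 < p) (hp2 : p < 2) (hε : 0 < ε)
    (F : Set (Fin M → Fin K → ℝ)) (hFnn : ∀ ρ ∈ F, ∀ m k, 0 ≤ ρ m k)
    (ρ' ρ'' : Fin M → Fin K → ℝ) (hρ' : ρ' ∈ F) (hρ'' : ρ'' ∈ F)
    (hmin : ∀ ρ ∈ F,
      ∑ m : Fin M, (Δ m * p / 2) * (totPow ρ' m + ε ^ 2) ^ (p / 2 - 1) * totPow ρ'' m
        ≤ ∑ m : Fin M, (Δ m * p / 2) * (totPow ρ' m + ε ^ 2) ^ (p / 2 - 1) * totPow ρ m) :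
    ∑ m : Fin M, Δ m * (totPow ρ' m + ε ^ 2) ^ (p / 2 - 1) * totPow ρ'' m
      ≤ ∑ m : Fin M, Δ m * (totPow ρ' m) ^ (p / 2) := by
  have h := hmin ρ' hρ'
  have e : ∀ ρ : Fin M → Fin K → ℝ,
      ∑ m : Fin M, (Δ m * p / 2) * (totPow ρ' m + ε ^ 2) ^ (p / 2 - 1) * totPow ρ m
        = (p / 2) * ∑ m : Fin M, Δ m * (totPow ρ' m + ε ^ 2) ^ (p / 2 - 1) * totPow ρ m := by
    intro ρ
    rw [Finset.mul_sum]
    exact Finset.sum_congr rfl fun m _ => by ring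
  rw [e, e] at h
  refine (le_of_mul_le_mul_left h (by positivity)).trans ?_
  refine Finset.sum_le_sum fun m _ => ?_
  rw [mul_assoc]
  refine mul_le_mul_of_nonneg_left ?_ (hΔ m).le
  have ht : 0 ≤ totPow ρ' m := Finset.sum_nonneg fun k _ => hFnn ρ' hρ' m k
  rcases ht.eq_or_lt with h0 | hpos
  · rw [← h0, mul_zero]
    exact Real.rpow_nonneg le_rfl _
  · have h1 : (totPow ρ' m + ε ^ 2) ^ (p / 2 - 1) ≤ totPow ρ' m ^ (p / 2 - 1) :=
      Real.rpow_le_rpow_of_nonpos hpos (by nlinarith [sq_nonneg ε]) (by linarith)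
    calc _ ≤ totPow ρ' m ^ (p / 2 - 1) * totPow ρ' m := mul_le_mul_of_nonneg_right h1 ht
      _ = totPow ρ' m ^ (p / 2) := by
        rw [Real.rpow_sub_one hpos.ne', div_mul_cancel₀ _ hpos.ne']
end

section
/- (Theorem 1, property 1: monotone decrease of the smoothed objective.) Under the IRLS setup, for any ε' with 0 ≤ ε' ≤ ε (the weights a_m being computed with ε): Σ_{m=1}^M Δ_m (t_m(ρ'') + ε'²)^{p̃/2} ≤ Σ_{m=1}^M Δ_m (t_m(ρ') + ε²)^{p̃/2}. In particular, with nonincreasing damping constants ε_n ≤ ε_{n−1}, the smoothed ℓp̃ objective of the iteratively reweighted least squares scheme is nonincreasing along the iterations. -/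
open Finset

theorem rpow_tangent_bound {x y q : ℝ} (hx : 0 < x) (hy : 0 ≤ y) (hq0 : 0 ≤ q) (hq1 : q ≤ 1) :
    y ^ q ≤ x ^ q + q * x ^ (q - 1) * (y - x) := by
  have hs : -1 ≤ y / x - 1 := by
    have := div_nonneg hy hx.le
    linarith
  have h := rpow_one_add_le_one_add_mul_self hs hq0 hq1
  have e1 : 1 + (y / x - 1) = y / x := by ring
  rw [e1, Real.div_rpow hy hx.le, div_le_iff₀ (Real.rpow_pos_of_pos hx q)] at h
  rw [Real.rpow_sub_one hx.ne']
  refine h.trans (le_of_eq ?_)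
  field_simp

/-- **Theorem 1, property 1: monotone decrease.** One IRLS step with
weights `a_m = (Δ_m p̃/2)(t_m(ρ') + ε²)^{p̃/2−1}` does not increase the smoothed ℓp̃
objective, for any new damping constant `ε'` with `0 ≤ ε' ≤ ε`. -/
theorem irls_smoothed_objective_decrease (M K : ℕ) (hM : 1 ≤ M) (hK : 1 ≤ K)
    (Δ : Fin M → ℝ) (hΔ : ∀ m, 0 < Δ m) (p ε : ℝ)
    (hp0 : 0 < p) (hp2 : p < 2) (hε : 0 < ε)
    (F : Set (Fin M → Fin K → ℝ)) (hFnn : ∀ ρ ∈ F, ∀ m k, 0 ≤ ρ m k)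
    (ρ' ρ'' : Fin M → Fin K → ℝ) (hρ' : ρ' ∈ F) (hρ'' : ρ'' ∈ F)
    (hmin : ∀ ρ ∈ F,
      ∑ m : Fin M, (Δ m * p / 2) * (totPow ρ' m + ε ^ 2) ^ (p / 2 - 1) * totPow ρ'' m
        ≤ ∑ m : Fin M, (Δ m * p / 2) * (totPow ρ' m + ε ^ 2) ^ (p / 2 - 1) * totPow ρ m)
    (ε' : ℝ) (hε'0 : 0 ≤ ε') (hε'ε : ε' ≤ ε) :
    ∑ m : Fin M, Δ m * (totPow ρ'' m + ε' ^ 2) ^ (p / 2)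
      ≤ ∑ m : Fin M, Δ m * (totPow ρ' m + ε ^ 2) ^ (p / 2) := by
  have ht : ∀ ρ ∈ F, ∀ m, 0 ≤ totPow ρ m := fun ρ hρ m =>
    Finset.sum_nonneg fun k _ => hFnn ρ hρ m k
  have hm := hmin ρ' hρ'
  have key : ∀ m, Δ m * (totPow ρ'' m + ε' ^ 2) ^ (p / 2)
      ≤ Δ m * (totPow ρ' m + ε ^ 2) ^ (p / 2)
        + ((Δ m * p / 2) * (totPow ρ' m + ε ^ 2) ^ (p / 2 - 1) * totPow ρ'' m
          - (Δ m * p / 2) * (totPow ρ' m + ε ^ 2) ^ (p / 2 - 1) * totPow ρ' m) := by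
    intro m
    have h1 := ht ρ' hρ' m
    have h2 := ht ρ'' hρ'' m
    have hsq : ε' ^ 2 ≤ ε ^ 2 := pow_le_pow_left₀ hε'0 hε'ε 2
    have a : (totPow ρ'' m + ε' ^ 2) ^ (p / 2) ≤ (totPow ρ'' m + ε ^ 2) ^ (p / 2) :=
      Real.rpow_le_rpow (by positivity) (by linarith) (by linarith)
    have b := rpow_tangent_bound (x := totPow ρ' m + ε ^ 2) (y := totPow ρ'' m + ε ^ 2)
      (q := p / 2) (by positivity) (by positivity) (by linarith) (by linarith)
    refine (mul_le_mul_of_nonneg_left (a.trans b) (hΔ m).le).trans (le_of_eq ?_)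
    ring
  have hsum := Finset.sum_le_sum fun m (_ : m ∈ Finset.univ) => key m
  rw [Finset.sum_add_distrib, Finset.sum_sub_distrib] at hsum
  linarith
end

section
/- (Inequality (37) in the proof of Theorem 1.) Under the IRLS setup, for every index m' ∈ {1,…,M}: Δ_{m'} · t_{m'}(ρ'') ≤ (t_{m'}(ρ') + ε²)^{1 − p̃/2} · Σ_{m=1}^M Δ_m · t_m(ρ')^{p̃/2}. -/
open Finset

/-- **inequality (37) in the proof of Theorem 1.** For every AP `m'`,
`Δ_{m'} t_{m'}(ρ'') ≤ (t_{m'}(ρ') + ε²)^{1 − p̃/2} · Σ_m Δ_m t_m(ρ')^{p̃/2}`. -/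
theorem irls_per_ap_power_bound (M K : ℕ) (hM : 1 ≤ M) (hK : 1 ≤ K)
    (Δ : Fin M → ℝ) (hΔ : ∀ m, 0 < Δ m) (p ε : ℝ)
    (hp0 : 0 < p) (hp2 : p < 2) (hε : 0 < ε)
    (F : Set (Fin M → Fin K → ℝ)) (hFnn : ∀ ρ ∈ F, ∀ m k, 0 ≤ ρ m k)
    (ρ' ρ'' : Fin M → Fin K → ℝ) (hρ' : ρ' ∈ F) (hρ'' : ρ'' ∈ F)
    (hmin : ∀ ρ ∈ F,
      ∑ m : Fin M, (Δ m * p / 2) * (totPow ρ' m + ε ^ 2) ^ (p / 2 - 1) * totPow ρ'' m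
        ≤ ∑ m : Fin M, (Δ m * p / 2) * (totPow ρ' m + ε ^ 2) ^ (p / 2 - 1) * totPow ρ m) :
    ∀ m' : Fin M, Δ m' * totPow ρ'' m'
      ≤ (totPow ρ' m' + ε ^ 2) ^ (1 - p / 2)
          * ∑ m : Fin M, Δ m * (totPow ρ' m) ^ (p / 2) := by
  have ht : ∀ ρ ∈ F, ∀ m, 0 ≤ totPow ρ m := fun ρ hρ m =>
    Finset.sum_nonneg fun k _ => hFnn ρ hρ m k
  intro m'
  have hpos : ∀ m, 0 < totPow ρ' m + ε ^ 2 := fun m => by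
    have := ht ρ' hρ' m
    positivity
  have h1 : (Δ m' * p / 2) * (totPow ρ' m' + ε ^ 2) ^ (p / 2 - 1) * totPow ρ'' m'
      ≤ ∑ m : Fin M, (Δ m * p / 2) * (totPow ρ' m + ε ^ 2) ^ (p / 2 - 1) * totPow ρ'' m := by
    refine Finset.single_le_sum
      (f := fun m => (Δ m * p / 2) * (totPow ρ' m + ε ^ 2) ^ (p / 2 - 1) * totPow ρ'' m)
      (fun m _ => ?_) (Finset.mem_univ m')
    have := ht ρ'' hρ'' m
    have := hpos m
    have := hΔ m
    positivity
  have h2 : ∀ m, (totPow ρ' m + ε ^ 2) ^ (p / 2 - 1) * totPow ρ' m ≤ totPow ρ' m ^ (p / 2) := by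
    intro m
    rcases (ht ρ' hρ' m).eq_or_lt with h | h
    · rw [← h, mul_zero]
      exact Real.rpow_nonneg le_rfl _
    · have h3 : (totPow ρ' m + ε ^ 2) ^ (p / 2 - 1) ≤ totPow ρ' m ^ (p / 2 - 1) :=
        Real.rpow_le_rpow_of_nonpos h (by nlinarith [sq_nonneg ε]) (by linarith)
      calc _ ≤ totPow ρ' m ^ (p / 2 - 1) * totPow ρ' m :=
            mul_le_mul_of_nonneg_right h3 h.le
        _ = totPow ρ' m ^ (p / 2) := by
            rw [Real.rpow_sub_one h.ne']
            field_simp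
  have h4 : ∑ m : Fin M, (Δ m * p / 2) * (totPow ρ' m + ε ^ 2) ^ (p / 2 - 1) * totPow ρ' m
      ≤ (p / 2) * ∑ m : Fin M, Δ m * (totPow ρ' m) ^ (p / 2) := by
    rw [Finset.mul_sum]
    refine Finset.sum_le_sum fun m _ => ?_
    have h5 : 0 ≤ Δ m * p / 2 := by
      have := hΔ m
      positivity
    calc _ = (Δ m * p / 2) * ((totPow ρ' m + ε ^ 2) ^ (p / 2 - 1) * totPow ρ' m) := by ring
      _ ≤ (Δ m * p / 2) * totPow ρ' m ^ (p / 2) := mul_le_mul_of_nonneg_left (h2 m) h5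
      _ = _ := by ring
  have h6 := h1.trans ((hmin ρ' hρ').trans h4)
  have h7 : Δ m' * (totPow ρ' m' + ε ^ 2) ^ (p / 2 - 1) * totPow ρ'' m'
      ≤ ∑ m : Fin M, Δ m * (totPow ρ' m) ^ (p / 2) := by
    refine le_of_mul_le_mul_left ?_ (half_pos hp0)
    calc _ = (Δ m' * p / 2) * (totPow ρ' m' + ε ^ 2) ^ (p / 2 - 1) * totPow ρ'' m' := by ring
      _ ≤ _ := h6
  have h8 : (totPow ρ' m' + ε ^ 2) ^ (1 - p / 2) * (totPow ρ' m' + ε ^ 2) ^ (p / 2 - 1) = 1 := by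
    rw [← Real.rpow_add (hpos m')]
    simp
  calc Δ m' * totPow ρ'' m'
      = ((totPow ρ' m' + ε ^ 2) ^ (1 - p / 2) * (totPow ρ' m' + ε ^ 2) ^ (p / 2 - 1))
        * (Δ m' * totPow ρ'' m') := by rw [h8, one_mul]
    _ = (totPow ρ' m' + ε ^ 2) ^ (1 - p / 2)
        * (Δ m' * (totPow ρ' m' + ε ^ 2) ^ (p / 2 - 1) * totPow ρ'' m') := by ring
    _ ≤ _ := mul_le_mul_of_nonneg_left h7 (Real.rpow_nonneg (hpos m').le _)
end

section
/- (Theorem 1, property 2: sparsity preservation, quantitative form.) Under the IRLS setup, if some AP m' has zero total transmit power at the previous iterate, i.e., t_{m'}(ρ') = 0, then its total transmit power at the new iterate satisfies Δ_{m'} · t_{m'}(ρ'') ≤ ε^{2 − p̃} · Σ_{m=1}^M Δ_m · t_m(ρ')^{p̃/2}. In particular, as the damping constant ε tends to 0, an AP with zero transmit power at one iteration keeps zero transmit power in the following iterations. -/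
open Finset

/-- **Theorem 1, property 2: sparsity preservation, quantitative form.**
If AP `m'` has zero total transmit power at the previous iterate, then after one IRLS
step its total transmit power satisfies
`Δ_{m'} t_{m'}(ρ'') ≤ ε^{2 − p̃} · Σ_m Δ_m t_m(ρ')^{p̃/2}`. -/
theorem irls_sparsity_preservation (M K : ℕ) (hM : 1 ≤ M) (hK : 1 ≤ K)
    (Δ : Fin M → ℝ) (hΔ : ∀ m, 0 < Δ m) (p ε : ℝ)
    (hp0 : 0 < p) (hp2 : p < 2) (hε : 0 < ε)
    (F : Set (Fin M → Fin K → ℝ)) (hFnn : ∀ ρ ∈ F, ∀ m k, 0 ≤ ρ m k)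
    (ρ' ρ'' : Fin M → Fin K → ℝ) (hρ' : ρ' ∈ F) (hρ'' : ρ'' ∈ F)
    (hmin : ∀ ρ ∈ F,
      ∑ m : Fin M, (Δ m * p / 2) * (totPow ρ' m + ε ^ 2) ^ (p / 2 - 1) * totPow ρ'' m
        ≤ ∑ m : Fin M, (Δ m * p / 2) * (totPow ρ' m + ε ^ 2) ^ (p / 2 - 1) * totPow ρ m)
    (m' : Fin M) (hzero : totPow ρ' m' = 0) :
    Δ m' * totPow ρ'' m'
      ≤ ε ^ (2 - p) * ∑ m : Fin M, Δ m * (totPow ρ' m) ^ (p / 2) := by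
  have ht : ∀ ρ ∈ F, ∀ m, 0 ≤ totPow ρ m := fun ρ hρ m =>
    Finset.sum_nonneg fun k _ => hFnn ρ hρ m k
  have hbase : ∀ m, 0 < totPow ρ' m + ε ^ 2 := fun m => by
    have := ht ρ' hρ' m
    positivity
  have h1 : (Δ m' * p / 2) * (totPow ρ' m' + ε ^ 2) ^ (p / 2 - 1) * totPow ρ'' m'
      ≤ ∑ m : Fin M, (Δ m * p / 2) * (totPow ρ' m + ε ^ 2) ^ (p / 2 - 1) * totPow ρ'' m := by
    refine Finset.single_le_sum
      (f := fun m => (Δ m * p / 2) * (totPow ρ' m + ε ^ 2) ^ (p / 2 - 1) * totPow ρ'' m)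
      (fun m _ => ?_) (Finset.mem_univ m')
    have h2 := ht ρ'' hρ'' m
    have h3 := Real.rpow_nonneg (hbase m).le (p / 2 - 1)
    have h4 := hΔ m
    positivity
  have h2 : ∑ m : Fin M, (Δ m * p / 2) * (totPow ρ' m + ε ^ 2) ^ (p / 2 - 1) * totPow ρ' m
      ≤ (p / 2) * ∑ m : Fin M, Δ m * (totPow ρ' m) ^ (p / 2) := by
    rw [Finset.mul_sum]
    refine Finset.sum_le_sum fun m _ => ?_
    have key : (totPow ρ' m + ε ^ 2) ^ (p / 2 - 1) * totPow ρ' m ≤ (totPow ρ' m) ^ (p / 2) := by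
      rcases (ht ρ' hρ' m).eq_or_lt with h0 | h0
      · rw [← h0, mul_zero]
        exact Real.rpow_nonneg le_rfl _
      · have h5 : (totPow ρ' m + ε ^ 2) ^ (p / 2 - 1) ≤ (totPow ρ' m) ^ (p / 2 - 1) :=
          Real.rpow_le_rpow_of_nonpos h0 (by nlinarith [sq_nonneg ε]) (by linarith)
        calc _ ≤ (totPow ρ' m) ^ (p / 2 - 1) * totPow ρ' m :=
              mul_le_mul_of_nonneg_right h5 h0.le
          _ = (totPow ρ' m) ^ (p / 2) := by
              rw [Real.rpow_sub_one h0.ne']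
              field_simp
    have h6 : 0 ≤ Δ m * p / 2 := by
      have := hΔ m
      positivity
    have h7 := mul_le_mul_of_nonneg_left key h6
    linarith
  have h3 := (h1.trans (hmin ρ' hρ')).trans h2
  have h4 : (totPow ρ' m' + ε ^ 2) ^ (p / 2 - 1) = ε ^ (p - 2) := by
    rw [hzero, zero_add, ← Real.rpow_natCast, ← Real.rpow_mul hε.le]
    congr 1
    push_cast
    ring
  rw [h4] at h3
  have h5 : ε ^ (p - 2) * (Δ m' * totPow ρ'' m')
      ≤ ∑ m : Fin M, Δ m * (totPow ρ' m) ^ (p / 2) := by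
    refine le_of_mul_le_mul_left ?_ (half_pos hp0)
    linarith
  have h6 : ε ^ (2 - p) * ε ^ (p - 2) = 1 := by
    rw [← Real.rpow_add hε]
    simp
  calc Δ m' * totPow ρ'' m' = ε ^ (2 - p) * (ε ^ (p - 2) * (Δ m' * totPow ρ'' m')) := by
        rw [← mul_assoc, h6, one_mul]
    _ ≤ _ := mul_le_mul_of_nonneg_left h5 (Real.rpow_nonneg hε.le _)
end
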